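/- Let (X,ρ) be a complete metric space, let k, l ≥ 2 be integers, and suppose {y_s}_{s ∈ l^{<ω}} is a (k,l)-regular set in X. Define D_s = B(y_s, 2^{−kn}) for s ∈ l^n, and let K = ⋂_{n=0}^∞ ⋃_{s ∈ l^n} D_s. Then dim_L K ≥ (log l)/(k·log 2); in particular dim_ML X ≥ (log l)/(k·log 2). -/

import Mathlib

/-!
Put `B = 2 ^ k`. Balls of level `n` have radius `B⁻ⁿ` and are nested along extension of indices,
so by completeness each of them meets `K`; two distinct balls of level `n` are at distance at least
`2 B⁻ⁿ`. Hence, around a point of `K`, the ball of radius `2 B⁻ᵐ` contains `l ^ j` points of `K`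
which are pairwise more than `2 B^{-(m + j + 1)}` apart. A set of diameter at most `r` contains at
most one point of an `r`-separated set, so packing numbers bound covering numbers from below; since
`B ^ logb B l = l`, sandwiching arbitrary radii between powers of `B` costs only a factor `l ^ 3`.
-/

open Metric ENNReal

variable {X : Type*} [MetricSpace X]

/-- `E` can be covered by `n` sets of diameter at most `r`. -/
def IsCoverBy (r : ℝ) (E : Set X) (n : ℕ) : Prop :=
  ∃ f : Fin n → Set X, (∀ i, EMetric.diam (f i) ≤ ENNReal.ofReal r) ∧ E ⊆ ⋃ i, f i

/-- The lower (minimal) dimension of `A ⊆ X`, with the metric induced from `X`,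
taking values in `[0, ∞]`.  It is the supremum of those `α ≥ 0` for which there is a
constant `C > 0` such that every ball `B(x, R) ∩ A` (with `x ∈ A` and `0 < r < R ≤ diam A`)
needs at least `C (R/r)^α` sets of diameter at most `r` to be covered. -/
noncomputable def lowerDim (A : Set X) : ℝ≥0∞ :=
  sSup (ENNReal.ofReal '' {α : ℝ | 0 ≤ α ∧ ∃ C : ℝ, 0 < C ∧
    ∀ r R : ℝ, 0 < r → r < R → ENNReal.ofReal R ≤ EMetric.diam A →
      ∀ x ∈ A, ∀ n : ℕ,
        IsCoverBy r (Metric.closedBall x R ∩ A) n → C * (R / r) ^ α ≤ (n : ℝ)})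

/-- The modified lower dimension of `A ⊆ X`: the supremum of the lower dimensions of all
subsets of `A`. -/
noncomputable def modLowerDim (A : Set X) : ℝ≥0∞ :=
  ⨆ (E : Set X) (_ : E ⊆ A), lowerDim E

/-- A `(k,l)`-regular set in `X`: a family of points indexed by finite sequences with entries
in `{0, …, l-1}` such that (i) consecutive points are `2^{-kn-1}`-close and (ii) points with
distinct indices of the same length `n` are `2^{-kn+2}`-separated. -/
def IsRegularSet (k l : ℕ) (y : List (Fin l) → X) : Prop :=
  (∀ (s : List (Fin l)) (c : Fin l),
      dist (y s) (y (s ++ [c])) ≤ (2 : ℝ) ^ (-(k * s.length : ℤ) - 1)) ∧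
  (∀ s t : List (Fin l), s.length = t.length → s ≠ t →
      (2 : ℝ) ^ (-(k * s.length : ℤ) + 2) ≤ dist (y s) (y t))

/-- A strongly `(k,l)`-regular set: a `(k,l)`-regular set that additionally satisfies
`y_{s⌢0} = y_s` for all `s`. -/
def IsStronglyRegularSet (k l : ℕ) (y : List (Fin l) → X) : Prop :=
  IsRegularSet k l y ∧
  ∀ (s : List (Fin l)) (c : Fin l), (c : ℕ) = 0 → y (s ++ [c]) = y s

section CoveringAndPacking

lemma packingNumber_le_packingNumber {Y : Type*} [PseudoEMetricSpace Y] {ε δ : NNReal} {E F : Set Y}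
    (hεδ : ε ≤ δ) (hEF : E ⊆ F) : packingNumber δ E ≤ packingNumber ε F :=
  iSup₂_le fun _ hC ↦ iSup_le fun hsep ↦
    (hsep.anti (by exact_mod_cast hεδ)).encard_le_packingNumber (hC.trans hEF)

lemma card_le_packingNumber {Y ι : Type*} [PseudoMetricSpace Y] [Fintype ι] {r : ℝ} {E : Set Y}
    {z : ι → Y} (hr : 0 ≤ r) (hz : ∀ i, z i ∈ E)
    (hsep : Pairwise fun i j ↦ r < dist (z i) (z j)) :
    (Fintype.card ι : ℕ∞) ≤ packingNumber r.toNNReal E := by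
  have hinj : Function.Injective z := by
    intro i j hij
    by_contra hne
    exact (hsep hne).not_ge (by simpa [hij] using hr)
  have hrange : IsSeparated r.toNNReal (Set.range z) := by
    rintro _ ⟨i, rfl⟩ _ ⟨j, rfl⟩ hne
    rw [edist_dist]
    have hij : r < dist (z i) (z j) := hsep (ne_of_apply_ne z hne)
    exact (ENNReal.ofReal_lt_ofReal_iff (hr.trans_lt hij)).2 hij
  calc (Fintype.card ι : ℕ∞) = (Set.range z).encard := by
        rw [← Set.image_univ, hinj.encard_image, Set.encard_univ, ENat.card_eq_coe_fintype_card]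
    _ ≤ packingNumber r.toNNReal E :=
        hrange.encard_le_packingNumber (Set.range_subset_iff.2 hz)

lemma IsCoverBy.packingNumber_le {r : ℝ} {E : Set X} {n : ℕ} (h : IsCoverBy r E n) :
    packingNumber r.toNNReal E ≤ n := by
  obtain ⟨f, hdiam, hcover⟩ := h
  refine iSup₂_le fun F hFE ↦ iSup_le fun hsep ↦ ?_
  choose g hg using fun x : F ↦ Set.mem_iUnion.1 (hcover (hFE x.2))
  have hinj : Function.Injective g := by
    intro x x' hgx
    by_contra hne
    have hclose : edist (x : X) x' ≤ ENNReal.ofReal r :=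
      (edist_le_ediam_of_mem (hg x) (hgx ▸ hg x')).trans (hdiam _)
    exact (hsep x.2 x'.2 (Subtype.coe_ne_coe.2 hne)).not_ge hclose
  simpa using ENat.card_le_card_of_injective hinj

end CoveringAndPacking

section LowerDimension

variable {B c : ℝ} {l : ℕ}

/- Of the three extra powers of `B`, one comes from rounding `R / r`, one from rounding the radius
`R` down to some `c / B ^ (m + 1)`, and one from the `+ 1` in the separation scale of `hpack`. -/
lemma exists_pow_le_packingNumber {Y : Type*} [PseudoMetricSpace Y] {A : Set Y} {x : Y} {r R : ℝ}
    (hB : 1 < B) (hx : x ∈ A) (hr : 0 < r) (hrR : r < R) (hRc : R ≤ c)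
    (hpack : ∀ m j : ℕ, (l : ℕ∞) ^ j ≤
      packingNumber (c / B ^ (m + j + 1)).toNNReal (closedBall x (c / B ^ m) ∩ A)) :
    ∃ j : ℕ, R / r ≤ B ^ (j + 3) ∧
      (l : ℕ∞) ^ j ≤ packingNumber r.toNNReal (closedBall x R ∩ A) := by
  have hR : 0 < R := hr.trans hrR
  have hB0 : 0 < B := zero_lt_one.trans hB
  obtain ⟨m, hm, hm'⟩ := exists_nat_pow_near ((one_le_div hR).2 hRc) hB
  obtain ⟨i, hi, hi'⟩ := exists_nat_pow_near ((one_le_div hr).2 hrR.le) hB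
  rcases lt_or_ge i 2 with hi2 | hi2
  · refine ⟨0, hi'.le.trans (pow_le_pow_right₀ hB.le (by omega)), ?_⟩
    rw [pow_zero, Order.one_le_iff_pos, packingNumber_pos_iff]
    exact ⟨x, mem_closedBall_self hR.le, hx⟩
  · obtain ⟨j, rfl⟩ := Nat.exists_eq_add_of_le' hi2
    have hball : c / B ^ (m + 1) ≤ R := ((div_lt_comm₀ hR (pow_pos hB0 _)).1 hm').le
    have hsep : r ≤ c / B ^ (m + 1 + j + 1) := by
      rw [le_div_iff₀ hr] at hi
      rw [le_div_iff₀ hR] at hm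
      rw [le_div_iff₀ (by positivity)]
      calc r * B ^ (m + 1 + j + 1) = B ^ m * (B ^ (j + 2) * r) := by ring
        _ ≤ B ^ m * R := by gcongr
        _ ≤ c := hm
    refine ⟨j, hi'.le, (hpack (m + 1) j).trans (packingNumber_le_packingNumber
      (Real.toNNReal_le_toNNReal hsep) ?_)⟩
    exact Set.inter_subset_inter_left A (closedBall_subset_closedBall hball)

theorem ofReal_logb_le_lowerDim {A : Set X} (hB : 1 < B) (hl : 1 ≤ l)
    (hA : ediam A ≤ ENNReal.ofReal c)
    (hpack : ∀ x ∈ A, ∀ m j : ℕ, (l : ℕ∞) ^ j ≤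
      packingNumber (c / B ^ (m + j + 1)).toNNReal (closedBall x (c / B ^ m) ∩ A)) :
    ENNReal.ofReal (Real.logb B l) ≤ lowerDim A := by
  have hB0 : 0 < B := zero_lt_one.trans hB
  have hl0 : (0 : ℝ) < l := by exact_mod_cast hl
  have hlogb : 0 ≤ Real.logb B l := Real.logb_nonneg hB (by exact_mod_cast hl)
  refine le_sSup ⟨_, ⟨hlogb, ((l : ℝ) ^ 3)⁻¹, by positivity, ?_⟩, rfl⟩
  intro r R hr hrR hRA x hx n hn
  have hR : 0 < R := hr.trans hrR
  have hRc : R ≤ c := (ENNReal.ofReal_le_ofReal_iff'.1 (hRA.trans hA)).resolve_right hR.not_ge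
  obtain ⟨j, hratio, hj⟩ := exists_pow_le_packingNumber hB hx hr hrR hRc (hpack x hx)
  have hjn : l ^ j ≤ n := by exact_mod_cast hj.trans hn.packingNumber_le
  calc ((l : ℝ) ^ 3)⁻¹ * (R / r) ^ Real.logb B l
      ≤ ((l : ℝ) ^ 3)⁻¹ * (B ^ (j + 3)) ^ Real.logb B l := by gcongr
    _ = ((l : ℝ) ^ 3)⁻¹ * (l : ℝ) ^ (j + 3) := by
        rw [← Real.rpow_pow_comm hB0.le, Real.rpow_logb hB0 hB.ne' hl0]
    _ = (l : ℝ) ^ j := by rw [pow_add]; field_simp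
    _ ≤ n := by exact_mod_cast hjn

end LowerDimension

lemma zpow_neg_natCast_mul_natCast {G : Type*} [DivisionMonoid G] (a : G) (k n : ℕ) :
    a ^ (-(k * n : ℤ)) = ((a ^ k) ^ n)⁻¹ := by
  rw [zpow_neg, ← Nat.cast_mul, zpow_natCast, pow_mul]

namespace IsRegularSet

open Filter Topology

variable {k l : ℕ} {y : List (Fin l) → X} {s t : List (Fin l)} {a b x : X}

/-- The ball `D_s = B(y_s, 2^{-kn})`, `n = |s|`, with the radius written as `((2 ^ k) ^ n)⁻¹`. -/
def cell (k : ℕ) (y : List (Fin l) → X) (s : List (Fin l)) : Set X :=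
  closedBall (y s) (((2 : ℝ) ^ k) ^ s.length)⁻¹

/-- The set `K = ⋂ n, ⋃ s ∈ l^n, D_s` generated by the family `y`. The radii are those of
`IsRegularSet.cell`, written as integer powers of `2`. -/
def limitSet (k : ℕ) (y : List (Fin l) → X) : Set X :=
  ⋂ n : ℕ, ⋃ s ∈ {s : List (Fin l) | s.length = n}, closedBall (y s) ((2 : ℝ) ^ (-(k * n : ℤ)))

lemma mem_limitSet : x ∈ limitSet k y ↔ ∀ n, ∃ s, s.length = n ∧ x ∈ cell k y s := by
  simp only [limitSet, cell, Set.mem_iInter, Set.mem_iUnion, Set.mem_ofPred_eq, exists_prop,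
    zpow_neg_natCast_mul_natCast]
  exact forall_congr' fun n ↦ exists_congr fun s ↦ and_congr_right fun hs ↦ by rw [hs]

lemma center_mem_cell : y s ∈ cell k y s := mem_closedBall_self (by positivity)

lemma ediam_limitSet_le : ediam (limitSet k y) ≤ ENNReal.ofReal 2 := by
  have hroot : ∀ x ∈ limitSet k y, dist x (y []) ≤ 1 := by
    intro x hx
    obtain ⟨s, hs, hxs⟩ := mem_limitSet.1 hx 0
    simpa [cell, List.length_eq_zero_iff.1 hs] using hxs
  refine ediam_le_of_forall_dist_le fun x hx x' hx' ↦ ?_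
  linarith [dist_triangle_right x x' (y []), hroot x hx, hroot x' hx']

lemma cell_subset_closedBall (hx : x ∈ cell k y s) :
    cell k y s ⊆ closedBall x (2 / ((2 : ℝ) ^ k) ^ s.length) := by
  intro a ha
  rw [cell, mem_closedBall] at hx ha
  rw [mem_closedBall, div_eq_mul_inv]
  linarith [dist_triangle_right a x (y s)]

lemma cell_append_singleton_subset (hy : IsRegularSet k l y) (hk : k ≠ 0) (s : List (Fin l))
    (i : Fin l) : cell k y (s ++ [i]) ⊆ cell k y s := by
  have hstep : dist (y (s ++ [i])) (y s) ≤ (((2 : ℝ) ^ k) ^ s.length)⁻¹ * 2⁻¹ := by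
    have h := hy.1 s i
    rwa [dist_comm, zpow_sub_one₀ two_ne_zero, zpow_neg_natCast_mul_natCast] at h
  have hratio : ((2 : ℝ) ^ k)⁻¹ ≤ 2⁻¹ := by
    gcongr
    exact le_self_pow₀ one_le_two hk
  refine closedBall_subset_closedBall' ?_
  calc (((2 : ℝ) ^ k) ^ (s ++ [i]).length)⁻¹ + dist (y (s ++ [i])) (y s)
      ≤ (((2 : ℝ) ^ k) ^ s.length)⁻¹ * ((2 : ℝ) ^ k)⁻¹
          + (((2 : ℝ) ^ k) ^ s.length)⁻¹ * 2⁻¹ := by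
        rw [List.length_append, List.length_singleton, pow_succ, mul_inv]
        gcongr
    _ ≤ (((2 : ℝ) ^ k) ^ s.length)⁻¹ * 2⁻¹ + (((2 : ℝ) ^ k) ^ s.length)⁻¹ * 2⁻¹ := by gcongr
    _ = (((2 : ℝ) ^ k) ^ s.length)⁻¹ := by ring

lemma cell_subset_cell (hy : IsRegularSet k l y) (hk : k ≠ 0) (hst : s <+: t) :
    cell k y t ⊆ cell k y s := by
  obtain ⟨w, rfl⟩ := hst
  induction w using List.reverseRecOn with
  | nil => rw [List.append_nil]
  | append_singleton w i ih =>
    rw [← List.append_assoc]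
    exact (hy.cell_append_singleton_subset hk _ i).trans ih

lemma two_div_le_dist_of_mem_cell (hy : IsRegularSet k l y) (hlen : s.length = t.length)
    (hne : s ≠ t) (ha : a ∈ cell k y s) (hb : b ∈ cell k y t) :
    2 / ((2 : ℝ) ^ k) ^ s.length ≤ dist a b := by
  have hcenters : (((2 : ℝ) ^ k) ^ s.length)⁻¹ * 2 ^ (2 : ℤ) ≤ dist (y s) (y t) := by
    have h := hy.2 s t hlen hne
    rwa [zpow_add₀ two_ne_zero, zpow_neg_natCast_mul_natCast] at h
  rw [cell, mem_closedBall] at ha hb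
  rw [dist_comm] at ha
  rw [← hlen] at hb
  rw [div_eq_mul_inv]
  linarith [dist_triangle4 (y s) a b (y t)]

lemma tendsto_diam_cell {ι : Type*} {f : Filter ι} {v : ι → List (Fin l)} (hk : k ≠ 0)
    (hv : Tendsto (fun i ↦ (v i).length) f atTop) :
    Tendsto (fun i ↦ diam (cell k y (v i))) f (𝓝 0) := by
  have hradius : Tendsto (fun i ↦ (((2 : ℝ) ^ k) ^ (v i).length)⁻¹) f (𝓝 0) :=
    tendsto_inv_atTop_zero.comp
      ((tendsto_pow_atTop_atTop_of_one_lt (one_lt_pow₀ _root_.one_lt_two hk)).comp hv)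
  refine squeeze_zero (fun _ ↦ diam_nonneg) (fun n ↦ diam_closedBall (by positivity)) ?_
  simpa only [mul_zero] using hradius.const_mul 2

lemma cell_inter_limitSet_nonempty [CompleteSpace X] [NeZero l] (hy : IsRegularSet k l y)
    (hk : k ≠ 0) (u : List (Fin l)) : (cell k y u ∩ limitSet k y).Nonempty := by
  let v : ℕ → List (Fin l) := fun n ↦ u ++ List.replicate n 0
  have hlen (n : ℕ) : (v n).length = u.length + n := by simp [v]
  have hv_mono {n N : ℕ} (hnN : n ≤ N) : v n <+: v N := by
    obtain ⟨i, rfl⟩ := Nat.exists_eq_add_of_le hnN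
    exact ⟨List.replicate i 0, by simp only [v, List.replicate_add, List.append_assoc]⟩
  have hlim : Tendsto (fun n ↦ (v n).length) atTop atTop := by
    simpa only [hlen, add_comm] using tendsto_add_atTop_nat u.length
  obtain ⟨z, hz⟩ : (⋂ n, cell k y (v n)).Nonempty :=
    nonempty_iInter_of_nonempty_biInter (fun _ ↦ isClosed_closedBall)
      (fun _ ↦ isBounded_closedBall)
      (fun N ↦ ⟨y (v N), Set.mem_iInter₂.2 fun n hn ↦
        hy.cell_subset_cell hk (hv_mono hn) center_mem_cell⟩)
      (tendsto_diam_cell hk hlim)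
  rw [Set.mem_iInter] at hz
  refine ⟨z, hy.cell_subset_cell hk (List.prefix_append u _) (hz 0), mem_limitSet.2 fun n ↦ ?_⟩
  have htake : (v n).take n <+: v n := ⟨_, List.take_append_drop n _⟩
  exact ⟨(v n).take n, by simp [hlen], hy.cell_subset_cell hk htake (hz n)⟩

lemma pow_le_packingNumber_cell_inter_limitSet [CompleteSpace X] [NeZero l]
    (hy : IsRegularSet k l y) (hk : k ≠ 0) (s : List (Fin l)) (j : ℕ) :
    (l : ℕ∞) ^ j ≤ packingNumber (2 / ((2 : ℝ) ^ k) ^ (s.length + j + 1)).toNNReal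
      (cell k y s ∩ limitSet k y) := by
  choose z hzcell hzlim using hy.cell_inter_limitSet_nonempty hk
  have hmem (t : List.Vector (Fin l) j) :
      z (s ++ t.toList) ∈ cell k y s ∩ limitSet k y :=
    ⟨hy.cell_subset_cell hk (List.prefix_append s _) (hzcell _), hzlim _⟩
  have hsep : Pairwise fun t t' : List.Vector (Fin l) j ↦
      2 / ((2 : ℝ) ^ k) ^ (s.length + j + 1) < dist (z (s ++ t.toList)) (z (s ++ t'.toList)) := by
    intro t t' hne
    have hne' : s ++ t.toList ≠ s ++ t'.toList := fun h ↦
      hne (List.Vector.toList_injective (List.append_cancel_left h))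
    calc 2 / ((2 : ℝ) ^ k) ^ (s.length + j + 1) < 2 / ((2 : ℝ) ^ k) ^ (s.length + j) := by
          gcongr ?_ / ?_ ^ ?_
          · exact one_lt_pow₀ _root_.one_lt_two hk
          · exact Nat.lt_succ_self _
      _ = 2 / ((2 : ℝ) ^ k) ^ (s ++ t.toList).length := by simp
      _ ≤ dist (z (s ++ t.toList)) (z (s ++ t'.toList)) :=
          hy.two_div_le_dist_of_mem_cell (by simp) hne' (hzcell _) (hzcell _)
  simpa using card_le_packingNumber (by positivity) hmem hsep

theorem ofReal_logb_le_lowerDim_limitSet [CompleteSpace X] [NeZero l] (hy : IsRegularSet k l y)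
    (hk : k ≠ 0) : ENNReal.ofReal (Real.logb ((2 : ℝ) ^ k) l) ≤ lowerDim (limitSet k y) := by
  refine ofReal_logb_le_lowerDim (one_lt_pow₀ _root_.one_lt_two hk) NeZero.one_le
    ediam_limitSet_le ?_
  intro x hx m j
  obtain ⟨s, rfl, hxs⟩ := mem_limitSet.1 hx m
  exact (hy.pow_le_packingNumber_cell_inter_limitSet hk s j).trans
    (packingNumber_le_packingNumber le_rfl
      (Set.inter_subset_inter_left _ (cell_subset_closedBall hxs)))

end IsRegularSet

lemma lowerDim_le_modLowerDim {E A : Set X} (hEA : E ⊆ A) : lowerDim E ≤ modLowerDim A :=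
  le_iSup₂_of_le E hEA le_rfl

/-- If `{y_s}` is a `(k,l)`-regular set (`k, l ≥ 2`) in a complete metric space `X`,
`D_s = B(y_s, 2^{-kn})` for `s ∈ l^n`, and `K = ⋂_n ⋃_{s ∈ l^n} D_s`, then
`dim_L K ≥ log l / (k log 2)`; in particular `dim_ML X ≥ log l / (k log 2)`. -/
theorem stmt6 {X : Type*} [MetricSpace X] [CompleteSpace X] (k l : ℕ) (hk : 2 ≤ k)
    (hl : 2 ≤ l) (y : List (Fin l) → X) (hy : IsRegularSet k l y) :
    ENNReal.ofReal (Real.log l / (k * Real.log 2)) ≤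
      lowerDim (⋂ n : ℕ, ⋃ s ∈ {s : List (Fin l) | s.length = n},
        Metric.closedBall (y s) ((2 : ℝ) ^ (-(k * n : ℤ)))) ∧
    ENNReal.ofReal (Real.log l / (k * Real.log 2)) ≤ modLowerDim (Set.univ : Set X) := by
  have : NeZero l := ⟨by omega⟩
  have hdim : ENNReal.ofReal (Real.log l / (k * Real.log 2)) ≤
      lowerDim (IsRegularSet.limitSet k y) := by
    simpa only [Real.logb, Real.log_pow] using hy.ofReal_logb_le_lowerDim_limitSet (by omega)
  exact ⟨hdim, hdim.trans (lowerDim_le_modLowerDim (Set.subset_univ _))⟩
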